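/- Let P and Q be compact convex polytopes with nonempty interior in R^m such that for every unit vector n which is an outward facet normal of P or of Q, the (m−1)-dimensional volume of the face of P with outward normal n is at least the (m−1)-dimensional volume of the face of Q with outward normal n. Then Vol_m(P) ≥ Vol_m(Q). -/

import Mathlib

open MeasureTheory Set
open scoped ENNReal Pointwise RealInnerProductSpace Topology

noncomputable section

abbrev Euc (m : ℕ) : Type := EuclideanSpace ℝ (Fin m)

/-- A convex body: compact convex set with nonempty interior. -/
def IsConvexBody {m : ℕ} (K : Set (Euc m)) : Prop :=
  Convex ℝ K ∧ IsCompact K ∧ (interior K).Nonempty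

/-- A (compact convex) polytope: convex hull of a finite set. -/
def IsPolytope {m : ℕ} (P : Set (Euc m)) : Prop :=
  ∃ s : Finset (Euc m), P = convexHull ℝ (s : Set (Euc m))

def unitSphere (m : ℕ) : Set (Euc m) := Metric.sphere 0 1

/-- `n` is an outward unit normal to `K` at the boundary point `x`. -/
def IsOutwardNormalAt {m : ℕ} (K : Set (Euc m)) (x n : Euc m) : Prop :=
  x ∈ frontier K ∧ ‖n‖ = 1 ∧ ∀ y ∈ K, ⟪y - x, n⟫ ≤ 0

open Classical in
/-- The (set-valued choice of) Gauss map of `K`. -/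
def gaussMap {m : ℕ} (K : Set (Euc m)) (x : Euc m) : Euc m :=
  if h : ∃ n, IsOutwardNormalAt K x n then h.choose else 0

/-- The surface area measure of `K`: the pushforward under the Gauss map of the
`(m-1)`-dimensional Hausdorff measure on the boundary of `K`. -/
def surfMeasure {m : ℕ} (K : Set (Euc m)) : Measure (Euc m) :=
  Measure.map (gaussMap K) (μH[(m : ℝ) - 1].restrict (frontier K))

/-- The face of `P` in direction `n`. -/
def faceIn {m : ℕ} (P : Set (Euc m)) (n : Euc m) : Set (Euc m) :=
  {x ∈ P | ∀ y ∈ P, ⟪y, n⟫ ≤ ⟪x, n⟫}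

/-- The `(m-1)`-dimensional volume of the face of `P` in direction `n`. -/
def faceArea {m : ℕ} (P : Set (Euc m)) (n : Euc m) : ℝ≥0∞ :=
  μH[(m : ℝ) - 1] (faceIn P n)

/-- `n` is the outward unit normal to a facet ((m-1)-dimensional face) of `P`. -/
def IsFacetNormal {m : ℕ} (P : Set (Euc m)) (n : Euc m) : Prop :=
  ‖n‖ = 1 ∧ 0 < faceArea P n

open Module

/-!
Write `h_K(u)` for the support function of `K` and `F_K(u)` for its face with outward normal `u`.
Let `n` be the dimension, translate both bodies to have `0` in the interior, and let `U` be a finite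
set of unit vectors such that `Q` is cut out by the half-spaces `⟪x, u⟫ ≤ h_Q(u)`, `u ∈ U`.

Comparing the Brunn–Minkowski bound `V(Q + tP)^{1/n} ≥ V(Q)^{1/n} + t V(P)^{1/n}` with
`V(Q + tP) ≤ V(Q) + t ∑ h_P(u) |F_Q(u)| + o(t)` (outside `Q`, the set `Q + tP` consists of caps over
the faces `F_Q(u)`, of height `t h_P(u)`) to first order as `t → 0⁺` yields Minkowski's first
inequality `n V(Q)^{(n-1)/n} V(P)^{1/n} ≤ ∑ h_P(u) |F_Q(u)|`. On the other hand the cones from `0`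
over the faces of `P` are essentially disjoint pieces of `P`, so `∑ h_P(u) |F_P(u)| ≤ n V(P)`. If
`|F_Q(u)| ≤ |F_P(u)|` for all `u ∈ U`, then `V(Q)^{(n-1)/n} V(P)^{1/n} ≤ V(P)`, that is,
`V(Q) ≤ V(P)`.
-/

/-! ### The Brunn–Minkowski inequality -/

lemma volume_add_volume_le_volume_add_of_isCompact {K L : Set ℝ} (hK : IsCompact K)
    (hL : IsCompact L) (hK0 : K.Nonempty) (hL0 : L.Nonempty) :
    volume K + volume L ≤ volume (K + L) := by
  obtain ⟨k, hkK, hk⟩ := hK.exists_isGreatest hK0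
  obtain ⟨l, hlL, hl⟩ := hL.exists_isLeast hL0
  have hdisj : AEDisjoint volume (K + {l}) ({k} + L) := by
    refine measure_mono_null (t := {k + l}) ?_ Real.volume_singleton
    simp only [add_singleton, singleton_add]
    rintro _ ⟨⟨y, hy, rfl⟩, ⟨z, hz, hyz : k + z = y + l⟩⟩
    have hyk : y ≤ k := hk hy
    have hlz : l ≤ z := hl hz
    change y + l = k + l
    linarith
  calc volume K + volume L = volume (K + {l}) + volume ({k} + L) := by simp
    _ = volume ((K + {l}) ∪ ({k} + L)) :=
      (measure_union₀ (isCompact_singleton.add hL).measurableSet.nullMeasurableSet hdisj).symm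
    _ ≤ volume (K + L) := measure_mono <| union_subset
      (add_subset_add_left (singleton_subset_iff.2 hlL))
      (add_subset_add_right (singleton_subset_iff.2 hkK))

lemma volume_add_volume_le_volume_add {A B : Set ℝ} (hA : MeasurableSet A)
    (hB : MeasurableSet B) (hA0 : A.Nonempty) (hB0 : B.Nonempty) :
    volume A + volume B ≤ volume (A + B) := by
  obtain ⟨x, hx⟩ := hA0
  obtain ⟨y, hy⟩ := hB0
  rw [hA.measure_eq_iSup_isCompact, hB.measure_eq_iSup_isCompact]
  simp only [iSup_and']
  refine ENNReal.biSup_add_biSup_le' (p := fun K => K ⊆ A ∧ IsCompact K)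
    (q := fun L => L ⊆ B ∧ IsCompact L) ⟨∅, by simp⟩ ⟨∅, by simp⟩ fun K hK L hL => ?_
  calc volume K + volume L ≤ volume (insert x K) + volume (insert y L) := by
        gcongr <;> exact subset_insert _ _
    _ ≤ volume (insert x K + insert y L) :=
      volume_add_volume_le_volume_add_of_isCompact (hK.2.insert x) (hL.2.insert y)
        (insert_nonempty _ _) (insert_nonempty _ _)
    _ ≤ volume (A + B) :=
      measure_mono (add_subset_add (insert_subset hx hK.1) (insert_subset hy hL.1))

lemma lintegral_eq_lintegral_meas_ofReal_lt {α : Type*} [MeasurableSpace α] (μ : Measure α)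
    {f : α → ℝ≥0∞} (hf : AEMeasurable f μ) (hf_top : ∀ x, f x ≠ ∞) :
    ∫⁻ x, f x ∂μ = ∫⁻ t in Ioi (0 : ℝ), μ {x | ENNReal.ofReal t < f x} := by
  calc ∫⁻ x, f x ∂μ = ∫⁻ x, ENNReal.ofReal (f x).toReal ∂μ := by
        simp only [ENNReal.ofReal_toReal (hf_top _)]
    _ = ∫⁻ t in Ioi (0 : ℝ), μ {x | t < (f x).toReal} :=
      lintegral_eq_lintegral_meas_lt μ (.of_forall fun _ => ENNReal.toReal_nonneg) hf.ennreal_toReal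
    _ = ∫⁻ t in Ioi (0 : ℝ), μ {x | ENNReal.ofReal t < f x} :=
      setLIntegral_congr_fun measurableSet_Ioi fun t ht => by
        simp only [ENNReal.ofReal_lt_iff_lt_toReal (le_of_lt ht) (hf_top _)]

lemma rpow_mul_rpow_le_ofReal_mul_add_ofReal_mul {a b : ℝ} (ha : 0 < a) (hb : 0 < b)
    (hab : a + b = 1) (x y : ℝ≥0∞) :
    x ^ a * y ^ b ≤ ENNReal.ofReal a * x + ENNReal.ofReal b * y := by
  by_cases hx : x = ∞
  · simp [hx, ENNReal.mul_top, ha]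
  by_cases hy : y = ∞
  · simp [hy, ENNReal.mul_top, hb]
  lift x to NNReal using hx
  lift y to NNReal using hy
  rw [← ENNReal.coe_rpow_of_nonneg _ ha.le, ← ENNReal.coe_rpow_of_nonneg _ hb.le]
  have hmean := NNReal.geom_mean_le_arith_mean2_weighted a.toNNReal b.toNNReal x y
    (by rw [← Real.toNNReal_add ha.le hb.le, hab, Real.toNNReal_one])
  rw [Real.coe_toNNReal a ha.le, Real.coe_toNNReal b hb.le] at hmean
  simpa only [ENNReal.ofReal, ← ENNReal.coe_mul, ← ENNReal.coe_add, ENNReal.coe_le_coe] using hmean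

lemma volume_superlevel_add_le {a b : ℝ} (ha : 0 < a) (hb : 0 < b) (hab : a + b = 1)
    {f g h : ℝ → ℝ≥0∞} (hf : Measurable f) (hg : Measurable g)
    (H : ∀ x y, f x ^ a * g y ^ b ≤ h (a * x + b * y)) {t : ℝ≥0∞}
    (hft : t < ⨆ x, f x) (hgt : t < ⨆ x, g x) :
    ENNReal.ofReal a * volume {x | t < f x} + ENNReal.ofReal b * volume {x | t < g x} ≤
      volume {x | t < h x} := by
  have hsmul {c : ℝ} (hc : 0 < c) (s : Set ℝ) : ENNReal.ofReal c * volume s = volume (c • s) := by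
    simp [Measure.addHaar_smul, abs_of_pos hc]
  have hsub : a • {x | t < f x} + b • {x | t < g x} ⊆ {x | t < h x} := by
    rintro _ ⟨_, ⟨x, hx, rfl⟩, _, ⟨y, hy, rfl⟩, rfl⟩
    refine lt_of_lt_of_le ?_ (H x y)
    calc t = t ^ a * t ^ b := by
          rw [← ENNReal.rpow_add_of_nonneg _ _ ha.le hb.le, hab, ENNReal.rpow_one]
      _ < f x ^ a * g y ^ b :=
        ENNReal.mul_lt_mul (ENNReal.rpow_lt_rpow hx ha) (ENNReal.rpow_lt_rpow hy hb)
  rw [hsmul ha, hsmul hb]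
  refine (volume_add_volume_le_volume_add ?_ ?_ ?_ ?_).trans (measure_mono hsub)
  · exact (measurableSet_lt measurable_const hf).const_smul₀ a
  · exact (measurableSet_lt measurable_const hg).const_smul₀ b
  · exact Nonempty.smul_set (s := {x | t < f x}) (lt_iSup_iff.1 hft)
  · exact Nonempty.smul_set (s := {x | t < g x}) (lt_iSup_iff.1 hgt)

/-- With both suprema equal to `1` every superlevel set of height `t < 1` is nonempty, so the
one-dimensional Brunn–Minkowski inequality can be integrated over the heights. -/
lemma ofReal_mul_lintegral_add_le_of_iSup_eq_one {a b : ℝ} (ha : 0 < a) (hb : 0 < b)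
    (hab : a + b = 1) {f g h : ℝ → ℝ≥0∞} (hf : Measurable f) (hg : Measurable g)
    (hh : Measurable h) (hf_sup : ⨆ x, f x = 1) (hg_sup : ⨆ x, g x = 1)
    (H : ∀ x y, f x ^ a * g y ^ b ≤ h (a * x + b * y)) :
    (ENNReal.ofReal a * ∫⁻ x, f x) + (ENNReal.ofReal b * ∫⁻ x, g x) ≤ ∫⁻ x, h x := by
  have hf1 (x) : f x ≤ 1 := hf_sup ▸ le_iSup f x
  have hg1 (x) : g x ≤ 1 := hg_sup ▸ le_iSup g x
  have Hmin x y : f x ^ a * g y ^ b ≤ min (h (a * x + b * y)) 1 := le_min (H x y)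
    (mul_le_one' (ENNReal.rpow_le_one (hf1 x) ha.le) (ENNReal.rpow_le_one (hg1 y) hb.le))
  have hlevel (t : ℝ) : ENNReal.ofReal a * volume {x | ENNReal.ofReal t < f x} +
      ENNReal.ofReal b * volume {x | ENNReal.ofReal t < g x} ≤
        volume {x | ENNReal.ofReal t < min (h x) 1} := by
    rcases le_or_gt 1 (ENNReal.ofReal t) with ht | ht
    · simp [((hf1 _).trans ht).not_gt, ((hg1 _).trans ht).not_gt]
    · exact volume_superlevel_add_le ha hb hab hf hg Hmin (hf_sup ▸ ht) (hg_sup ▸ ht)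
  have hmeas (f : ℝ → ℝ≥0∞) : Measurable fun t : ℝ => volume {x | ENNReal.ofReal t < f x} :=
    Antitone.measurable fun _ _ hst => measure_mono fun _ hx =>
      (ENNReal.ofReal_le_ofReal hst).trans_lt hx
  have hne {x : ℝ≥0∞} (hx : x ≤ 1) : x ≠ ∞ := ne_top_of_le_ne_top ENNReal.one_ne_top hx
  calc (ENNReal.ofReal a * ∫⁻ x, f x) + (ENNReal.ofReal b * ∫⁻ x, g x)
      = ∫⁻ t in Ioi (0 : ℝ), (ENNReal.ofReal a * volume {x | ENNReal.ofReal t < f x} +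
          ENNReal.ofReal b * volume {x | ENNReal.ofReal t < g x}) := by
        rw [lintegral_eq_lintegral_meas_ofReal_lt _ hf.aemeasurable fun x => hne (hf1 x),
          lintegral_eq_lintegral_meas_ofReal_lt _ hg.aemeasurable fun x => hne (hg1 x),
          lintegral_add_left ((hmeas f).const_mul _), lintegral_const_mul _ (hmeas f),
          lintegral_const_mul _ (hmeas g)]
    _ ≤ ∫⁻ t in Ioi (0 : ℝ), volume {x | ENNReal.ofReal t < min (h x) 1} := lintegral_mono hlevel
    _ = ∫⁻ x, min (h x) 1 := (lintegral_eq_lintegral_meas_ofReal_lt _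
        (hh.min measurable_const).aemeasurable fun _ => hne (min_le_right _ _)).symm
    _ ≤ ∫⁻ x, h x := lintegral_mono fun _ => min_le_left _ _

lemma lintegral_rpow_mul_le_of_iSup_ne_top {a b : ℝ} (ha : 0 < a) (hb : 0 < b)
    (hab : a + b = 1) {f g h : ℝ → ℝ≥0∞} (hf : Measurable f) (hg : Measurable g)
    (hh : Measurable h) (hf_sup : ⨆ x, f x ≠ ∞) (hg_sup : ⨆ x, g x ≠ ∞)
    (H : ∀ x y, f x ^ a * g y ^ b ≤ h (a * x + b * y)) :
    (∫⁻ x, f x) ^ a * (∫⁻ x, g x) ^ b ≤ ∫⁻ x, h x := by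
  obtain hf0 | hf0 := eq_or_ne (⨆ x, f x) 0
  · simp [ENNReal.iSup_eq_zero.1 hf0, ha]
  obtain hg0 | hg0 := eq_or_ne (⨆ x, g x) 0
  · simp [ENNReal.iSup_eq_zero.1 hg0, hb]
  generalize hA : ⨆ x, f x = A at *
  generalize hB : ⨆ x, g x = B at *
  have hAa : A ^ a ≠ 0 ∧ A ^ a ≠ ∞ :=
    ⟨by simp [hf0, hf_sup], ENNReal.rpow_ne_top_of_nonneg ha.le hf_sup⟩
  have hBb : B ^ b ≠ 0 ∧ B ^ b ≠ ∞ :=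
    ⟨by simp [hg0, hg_sup], ENNReal.rpow_ne_top_of_nonneg hb.le hg_sup⟩
  have hdiv (x y : ℝ≥0∞) : (x / A) ^ a * (y / B) ^ b = x ^ a * y ^ b / (A ^ a * B ^ b) := by
    rw [ENNReal.div_rpow_of_nonneg _ _ ha.le, ENNReal.div_rpow_of_nonneg _ _ hb.le,
      ENNReal.mul_div_mul_comm (.inl hAa.1) (.inl hAa.2)]
  have hintegral (k : ℝ → ℝ≥0∞) (C : ℝ≥0∞) (hk : Measurable k) :
      ∫⁻ x, k x / C = (∫⁻ x, k x) / C := by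
    simp only [div_eq_mul_inv, lintegral_mul_const _ hk]
  have hle : (∫⁻ x, f x) ^ a * (∫⁻ x, g x) ^ b / (A ^ a * B ^ b) ≤
      (∫⁻ x, h x) / (A ^ a * B ^ b) := by
    rw [← hdiv, ← hintegral f A hf, ← hintegral g B hg, ← hintegral h _ hh]
    refine (rpow_mul_rpow_le_ofReal_mul_add_ofReal_mul ha hb hab _ _).trans
      (ofReal_mul_lintegral_add_le_of_iSup_eq_one ha hb hab (hf.div_const A) (hg.div_const B)
        (hh.div_const _) ?_ ?_ fun x y => ?_)
    · rw [← ENNReal.iSup_div, hA, ENNReal.div_self hf0 hf_sup]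
    · rw [← ENNReal.iSup_div, hB, ENNReal.div_self hg0 hg_sup]
    · rw [hdiv]
      exact ENNReal.div_le_div_right (H x y) _
  have hM0 : A ^ a * B ^ b ≠ 0 := mul_ne_zero hAa.1 hBb.1
  have hM_top : A ^ a * B ^ b ≠ ∞ := ENNReal.mul_ne_top hAa.2 hBb.2
  rwa [ENNReal.div_le_iff hM0 hM_top, ENNReal.div_mul_cancel hM0 hM_top] at hle

/-- The Prékopa–Leindler inequality for functions on a real vector space, as a property of the
measure `μ` with respect to which they are integrated; stated this way it tensorises. -/
def PrekopaLeindler {E : Type*} [AddCommGroup E] [Module ℝ E] [MeasurableSpace E]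
    (μ : Measure E) : Prop :=
  ∀ ⦃a b : ℝ⦄, 0 < a → 0 < b → a + b = 1 → ∀ ⦃f g h : E → ℝ≥0∞⦄, Measurable f → Measurable g →
    Measurable h → (∀ x y, f x ^ a * g y ^ b ≤ h (a • x + b • y)) →
    (∫⁻ x, f x ∂μ) ^ a * (∫⁻ x, g x ∂μ) ^ b ≤ ∫⁻ x, h x ∂μ

namespace PrekopaLeindler

theorem real : PrekopaLeindler (volume : Measure ℝ) := by
  intro a b ha hb hab f g h hf hg hh H
  obtain hf0 | hf0 := eq_or_ne (∫⁻ x, f x) 0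
  · simp [hf0, ha]
  obtain hg0 | hg0 := eq_or_ne (∫⁻ x, g x) 0
  · simp [hg0, hb]
  have htrunc {k : ℝ → ℝ≥0∞} (hk : Measurable k) :
      Filter.Tendsto (fun n : ℕ => ∫⁻ x, min (k x) n) Filter.atTop (𝓝 (∫⁻ x, k x)) := by
    refine lintegral_tendsto_of_tendsto_of_monotone
      (fun n => (hk.min measurable_const).aemeasurable) (.of_forall fun x m n hmn => ?_)
      (.of_forall fun x => ?_)
    · exact min_le_min_left _ (Nat.cast_le.2 hmn)
    · simpa using (tendsto_const_nhds (x := k x)).min ENNReal.tendsto_nat_nhds_top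
  have hsup (k : ℝ → ℝ≥0∞) (n : ℕ) : ⨆ x, min (k x) n ≠ ∞ :=
    ne_top_of_le_ne_top (ENNReal.natCast_ne_top n) (iSup_le fun x => min_le_right _ _)
  refine le_of_tendsto' (ENNReal.Tendsto.mul
    ((htrunc hf).ennrpow_const a) (.inl (by simp [hf0, ha.not_gt]))
    ((htrunc hg).ennrpow_const b) (.inl (by simp [hg0, hb.not_gt]))) fun n => ?_
  refine lintegral_rpow_mul_le_of_iSup_ne_top ha hb hab (hf.min measurable_const)
    (hg.min measurable_const) hh (hsup f n) (hsup g n) fun x y => le_trans ?_ (H x y)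
  gcongr <;> exact min_le_left _ _

section

variable {E F : Type*} [AddCommGroup E] [Module ℝ E] [MeasurableSpace E]
  [AddCommGroup F] [Module ℝ F] [MeasurableSpace F] {μ : Measure E} {ν : Measure F}

theorem prod [SFinite μ] [SFinite ν] (hμ : PrekopaLeindler μ) (hν : PrekopaLeindler ν) :
    PrekopaLeindler (μ.prod ν) := by
  intro a b ha hb hab f g h hf hg hh H
  simp only [lintegral_prod _ hf.aemeasurable, lintegral_prod _ hg.aemeasurable,
    lintegral_prod _ hh.aemeasurable]
  exact hμ ha hb hab hf.lintegral_prod_right' hg.lintegral_prod_right' hh.lintegral_prod_right'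
    fun x y => hν ha hb hab (hf.comp measurable_prodMk_left) (hg.comp measurable_prodMk_left)
      (hh.comp measurable_prodMk_left) fun v w => H (x, v) (y, w)

theorem of_measurePreserving (hμ : PrekopaLeindler μ) (e : E →ₗ[ℝ] F)
    (he : MeasurePreserving e μ ν) : PrekopaLeindler ν := by
  intro a b ha hb hab f g h hf hg hh H
  rw [← he.lintegral_comp hf, ← he.lintegral_comp hg, ← he.lintegral_comp hh]
  exact hμ ha hb hab (hf.comp he.measurable) (hg.comp he.measurable) (hh.comp he.measurable)
    fun x y => by simpa using H (e x) (e y)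

theorem dirac_zero : PrekopaLeindler (Measure.dirac (0 : E)) := by
  intro a b _ _ _ f g h hf hg hh H
  simpa [lintegral_dirac' _ hf, lintegral_dirac' _ hg, lintegral_dirac' _ hh] using H 0 0

end

theorem pi (n : ℕ) : PrekopaLeindler (volume : Measure (Fin n → ℝ)) := by
  induction n with
  | zero =>
    rw [volume_pi, Measure.pi_of_empty _ 0]
    exact dirac_zero
  | succ n ih =>
    refine (real.prod ih).of_measurePreserving (Fin.consLinearEquiv ℝ fun _ : Fin (n + 1) => ℝ) ?_
    have hcons : ⇑(Fin.consLinearEquiv ℝ fun _ : Fin (n + 1) => ℝ).toLinearMap =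
        (MeasurableEquiv.piFinSuccAbove (fun _ : Fin (n + 1) => ℝ) 0).symm := by
      ext x i
      simp [MeasurableEquiv.piFinSuccAbove]
    rw [hcons]
    exact (volume_preserving_piFinSuccAbove (fun _ : Fin (n + 1) => ℝ) 0).symm _

section

variable {E : Type*} [NormedAddCommGroup E] [InnerProductSpace ℝ E] [FiniteDimensional ℝ E]
  [MeasurableSpace E] [BorelSpace E]

theorem volume_innerProductSpace : PrekopaLeindler (volume : Measure E) :=
  (pi _).of_measurePreserving
    ((stdOrthonormalBasis ℝ E).repr.symm.toLinearMap ∘ₗ (WithLp.linearEquiv 2 ℝ _).symm.toLinearMap)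
    ((stdOrthonormalBasis ℝ E).measurePreserving_repr_symm.comp (PiLp.volume_preserving_toLp _))

end

end PrekopaLeindler

section BrunnMinkowski

variable {E : Type*} [NormedAddCommGroup E] [InnerProductSpace ℝ E] [FiniteDimensional ℝ E]
  [MeasurableSpace E] [BorelSpace E] {A B : Set E}

lemma volume_rpow_mul_rpow_le {a b : ℝ} (ha : 0 < a) (hb : 0 < b) (hab : a + b = 1)
    (hA : IsCompact A) (hB : IsCompact B) :
    volume A ^ a * volume B ^ b ≤ volume (a • A + b • B) := by
  have hAm := hA.measurableSet
  have hBm := hB.measurableSet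
  have hCm := ((hA.smul a).add (hB.smul b)).measurableSet
  have h := PrekopaLeindler.volume_innerProductSpace ha hb hab (measurable_one.indicator hAm)
    (measurable_one.indicator hBm) (measurable_one.indicator hCm) fun x y => by
      by_cases hx : x ∈ A
      · by_cases hy : y ∈ B
        · simp [hx, hy, add_mem_add (smul_mem_smul_set (a := a) hx)
            (smul_mem_smul_set (a := b) hy)]
        · simp [hy, hb]
      · simp [hx, ha]
  simpa [lintegral_indicator_one, hAm, hBm, hCm] using h

/-- The `n`-th root of the volume of a subset of an `n`-dimensional space: the quantity that the
Brunn–Minkowski inequality shows to be superadditive. -/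
def volumeRoot (A : Set E) : ℝ≥0∞ := volume A ^ (finrank ℝ E : ℝ)⁻¹

lemma volumeRoot_mono (h : A ⊆ B) : volumeRoot A ≤ volumeRoot B :=
  ENNReal.rpow_le_rpow (measure_mono h) (by positivity)

lemma volumeRoot_vadd (x : E) (A : Set E) : volumeRoot (x +ᵥ A) = volumeRoot A := by
  rw [volumeRoot, measure_vadd, volumeRoot]

lemma volumeRoot_ne_top (hA : IsCompact A) : volumeRoot A ≠ ∞ :=
  ENNReal.rpow_ne_top_of_nonneg (by positivity) hA.measure_ne_top

variable [Nontrivial E]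

lemma volumeRoot_pow_finrank (A : Set E) : volumeRoot A ^ finrank ℝ E = volume A := by
  rw [volumeRoot, ← ENNReal.rpow_natCast, ENNReal.rpow_inv_rpow (by simp [finrank_pos.ne'])]

lemma volumeRoot_smul {r : ℝ} (hr : 0 ≤ r) (A : Set E) :
    volumeRoot (r • A) = ENNReal.ofReal r * volumeRoot A := by
  have hn : (finrank ℝ E : ℝ) ≠ 0 := by simp [finrank_pos.ne']
  rw [volumeRoot, Measure.addHaar_smul, abs_of_nonneg (by positivity), ENNReal.ofReal_pow hr,
    ENNReal.mul_rpow_of_nonneg _ _ (by positivity), ← ENNReal.rpow_natCast,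
    ENNReal.rpow_rpow_inv hn, volumeRoot]

/-- Rescaling `A` and `B` to volume `1` reduces the claim to the multiplicative inequality. -/
theorem volumeRoot_add_volumeRoot_le (hA : IsCompact A) (hB : IsCompact B) (hA0 : A.Nonempty)
    (hB0 : B.Nonempty) : volumeRoot A + volumeRoot B ≤ volumeRoot (A + B) := by
  obtain hα | hα := eq_or_ne (volumeRoot A) 0
  · obtain ⟨x, hx⟩ := hA0
    rw [hα, zero_add, ← volumeRoot_vadd x]
    exact volumeRoot_mono (vadd_set_subset_add hx)
  obtain hβ | hβ := eq_or_ne (volumeRoot B) 0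
  · obtain ⟨y, hy⟩ := hB0
    rw [hβ, add_zero, ← volumeRoot_vadd y, add_comm]
    exact volumeRoot_mono (vadd_set_subset_add hy)
  have hα_pos := ENNReal.toReal_pos hα (volumeRoot_ne_top hA)
  have hβ_pos := ENNReal.toReal_pos hβ (volumeRoot_ne_top hB)
  have hα_eq := ENNReal.ofReal_toReal (volumeRoot_ne_top hA)
  have hβ_eq := ENNReal.ofReal_toReal (volumeRoot_ne_top hB)
  generalize (volumeRoot A).toReal = α at *
  generalize (volumeRoot B).toReal = β at *
  have hunit {C : Set E} {r : ℝ} (hr : 0 < r) (hC : ENNReal.ofReal r = volumeRoot C) :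
      volume (r⁻¹ • C) = 1 := by
    rw [← volumeRoot_pow_finrank, volumeRoot_smul (by positivity), ← hC,
      ← ENNReal.ofReal_mul (by positivity), inv_mul_cancel₀ hr.ne', ENNReal.ofReal_one, one_pow]
  have hle : 1 ≤ volume ((α + β)⁻¹ • (A + B)) := by
    have h := volume_rpow_mul_rpow_le (a := α / (α + β)) (b := β / (α + β)) (by positivity)
      (by positivity) (by field_simp) (hA.smul α⁻¹) (hB.smul β⁻¹)
    rwa [hunit hα_pos hα_eq, hunit hβ_pos hβ_eq, ENNReal.one_rpow, ENNReal.one_rpow, one_mul,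
      smul_smul, smul_smul, show α / (α + β) * α⁻¹ = (α + β)⁻¹ by field_simp,
      show β / (α + β) * β⁻¹ = (α + β)⁻¹ by field_simp, ← smul_add] at h
  calc volumeRoot A + volumeRoot B = ENNReal.ofReal (α + β) * 1 := by
        rw [mul_one, ENNReal.ofReal_add hα_pos.le hβ_pos.le, hα_eq, hβ_eq]
    _ ≤ ENNReal.ofReal (α + β) * volumeRoot ((α + β)⁻¹ • (A + B)) := by
        gcongr
        exact ENNReal.one_le_rpow hle (inv_pos.2 (Nat.cast_pos.2 finrank_pos))
    _ = volumeRoot (A + B) := by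
        rw [← volumeRoot_smul (by positivity), smul_inv_smul₀ (by positivity)]

end BrunnMinkowski

/-! ### Faces and cones -/

section SupportFunction

variable {E : Type*} [NormedAddCommGroup E] [InnerProductSpace ℝ E] {K : Set E} {u x : E}

/-- The support function `h_K(u)`, the maximum of `⟪x, u⟫` over `x ∈ K`; it is meaningful for
nonempty compact `K` and takes the junk values of `sSup` otherwise. -/
def supportFun (K : Set E) (u : E) : ℝ := sSup ((fun x => ⟪x, u⟫) '' K)

/-- The face `F_K(u)` of `K` cut out by its supporting hyperplane with outward normal `u`. -/
def supportFace (K : Set E) (u : E) : Set E := K ∩ {x | ⟪x, u⟫ = supportFun K u}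

lemma inner_le_supportFun (hK : IsCompact K) (u : E) (hx : x ∈ K) : ⟪x, u⟫ ≤ supportFun K u :=
  le_csSup (hK.image (by fun_prop : Continuous fun x : E => ⟪x, u⟫)).bddAbove
    (mem_image_of_mem _ hx)

lemma supportFun_pos (hK : IsCompact K) (h0 : 0 ∈ interior K) (hu : u ≠ 0) :
    0 < supportFun K u := by
  obtain ⟨r, hr, hmem⟩ : ∃ r > (0 : ℝ), r • u ∈ K := by
    have hev : ∀ᶠ r : ℝ in 𝓝[>] 0, r • u ∈ K :=
      ((continuous_id.smul continuous_const).tendsto' (0 : ℝ) 0 (zero_smul ℝ u)).eventually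
        (mem_interior_iff_mem_nhds.1 h0) |>.filter_mono nhdsWithin_le_nhds
    exact (hev.and self_mem_nhdsWithin).exists.imp fun _ h => h.symm
  refine lt_of_lt_of_le ?_ (inner_le_supportFun hK u hmem)
  rw [real_inner_smul_left]
  exact mul_pos hr (real_inner_self_pos.2 hu)

lemma isCompact_supportFace (hK : IsCompact K) (u : E) : IsCompact (supportFace K u) :=
  hK.inter_right (isClosed_eq (by fun_prop) continuous_const)

lemma mem_supportFace_iff (hK : IsCompact K) :
    x ∈ supportFace K u ↔ x ∈ K ∧ ∀ y ∈ K, ⟪y, u⟫ ≤ ⟪x, u⟫ := by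
  refine and_congr_right fun hx => ⟨fun h y hy => ?_, fun h => ?_⟩
  · exact (inner_le_supportFun hK u hy).trans_eq h.symm
  · exact (inner_le_supportFun hK u hx).antisymm
      (csSup_le ⟨_, mem_image_of_mem _ hx⟩ (forall_mem_image.2 h))

end SupportFunction

section Slices

variable {E : Type*} [NormedAddCommGroup E] [InnerProductSpace ℝ E] [FiniteDimensional ℝ E]
  [MeasurableSpace E] [BorelSpace E] {u : E}

lemma volume_eq_lintegral_slice (hu : ‖u‖ = 1) {A : Set E} (hA : MeasurableSet A) :
    volume A = ∫⁻ s : ℝ, μHE[finrank ℝ E - 1] (A ∩ {x | ⟪x, u⟫ = s}) := by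
  have hu0 : u ≠ 0 := norm_ne_zero_iff.1 (by simp [hu])
  have hslice (s : ℝ) : (AffineSubspace.mk' (s • u +ᵥ (0 : E)) (ℝ ∙ u)ᗮ : Set E) =
      {x | ⟪x, u⟫ = s} := by
    ext x
    rw [SetLike.mem_coe, AffineSubspace.mem_mk', Submodule.mem_orthogonal_singleton_iff_inner_left]
    simp [inner_sub_left, real_inner_smul_left, hu, sub_eq_zero]
  rw [← InnerProductSpace.euclideanHausdorffMeasure_eq_volume,
    EuclideanGeometry.euclideanHausdorffMeasure_eq_lintegral 0 hu0 hA, ← ofReal_norm, hu,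
    ENNReal.ofReal_one, one_mul]
  simp only [hslice]

lemma euclideanHausdorffMeasure_ne_top_of_subset_vadd (W : Submodule ℝ E) {A : Set E}
    (hA : IsCompact A) {x : E} (hAW : A ⊆ x +ᵥ (W : Set E)) : μHE[finrank ℝ W] A ≠ ∞ := by
  have hiso : Isometry fun w : W => x + w :=
    (IsometryEquiv.addLeft x).isometry.comp isometry_subtype_coe
  have hA_range : A ⊆ range fun w : W => x + w := fun y hy => by
    obtain ⟨w, hw, rfl⟩ := hAW hy
    exact ⟨⟨w, hw⟩, rfl⟩
  rw [← image_preimage_eq_of_subset hA_range, hiso.euclideanHausdorffMeasure_image]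
  exact (hiso.isClosedEmbedding.isCompact_preimage hA).measure_ne_top

lemma euclideanHausdorffMeasure_ne_top_of_subset_hyperplane (hu : u ≠ 0) {A : Set E}
    (hA : IsCompact A) {s : ℝ} (hAs : A ⊆ {x | ⟪x, u⟫ = s}) : μHE[finrank ℝ E - 1] A ≠ ∞ := by
  have hrank : finrank ℝ (ℝ ∙ u)ᗮ = finrank ℝ E - 1 := by
    rw [← Submodule.finrank_add_finrank_orthogonal (ℝ ∙ u), finrank_span_singleton hu,
      add_tsub_cancel_left]
  obtain rfl | ⟨x, hx⟩ := A.eq_empty_or_nonempty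
  · simp
  rw [← hrank]
  refine euclideanHausdorffMeasure_ne_top_of_subset_vadd _ hA (x := x) fun y hy => ?_
  rw [mem_vadd_set_iff_neg_vadd_mem, SetLike.mem_coe,
    Submodule.mem_orthogonal_singleton_iff_inner_left, vadd_eq_add, inner_add_left, inner_neg_left,
    (hAs hx : ⟪x, u⟫ = s), (hAs hy : ⟪y, u⟫ = s), neg_add_cancel]

end Slices

lemma natCast_mul_lintegral_Ioc_div_pow {h : ℝ} (hh : 0 < h) (n : ℕ) :
    (n + 1 : ℕ) * ∫⁻ s in Ioc 0 h, ENNReal.ofReal (s / h) ^ n = ENNReal.ofReal h := by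
  have hintegr : IntegrableOn (fun s : ℝ => (s / h) ^ n) (Ioc 0 h) :=
    (by fun_prop : Continuous fun s : ℝ => (s / h) ^ n).integrableOn_Ioc
  have hpos : ∀ᵐ s ∂volume.restrict (Ioc 0 h), 0 ≤ (s / h) ^ n :=
    (ae_restrict_iff' measurableSet_Ioc).2 (.of_forall fun s hs =>
      pow_nonneg (div_nonneg hs.1.le hh.le) n)
  calc (n + 1 : ℕ) * ∫⁻ s in Ioc 0 h, ENNReal.ofReal (s / h) ^ n
      = (n + 1 : ℕ) * ∫⁻ s in Ioc 0 h, ENNReal.ofReal ((s / h) ^ n) :=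
        congrArg _ (setLIntegral_congr_fun measurableSet_Ioc fun s hs =>
          (ENNReal.ofReal_pow (div_nonneg hs.1.le hh.le) n).symm)
    _ = ENNReal.ofReal ((n + 1 : ℕ) * ∫ s in 0..h, (s / h) ^ n) := by
        rw [ENNReal.ofReal_mul (Nat.cast_nonneg _), ENNReal.ofReal_natCast,
          ← ofReal_integral_eq_lintegral_ofReal hintegr hpos, intervalIntegral.integral_of_le hh.le]
    _ = ENNReal.ofReal h := by
        rw [intervalIntegral.integral_comp_div (fun s => s ^ n) hh.ne', integral_pow]
        congr 1
        simp [hh.ne']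
        field_simp

section FaceCone

variable {E : Type*} [NormedAddCommGroup E] [InnerProductSpace ℝ E] {K : Set E} {u v z : E}

/-- The cone with apex `0` over the face of `K` with outward normal `u`; when `0 ∈ K` these cones
are the pieces of the decomposition of `K` behind `n V(K) = ∑ h_K(u) |F_K(u)|`. -/
def faceCone (K : Set E) (u : E) : Set E := Icc (0 : ℝ) 1 • supportFace K u

lemma isCompact_faceCone (hK : IsCompact K) (u : E) : IsCompact (faceCone K u) :=
  isCompact_Icc.smul_set (isCompact_supportFace hK u)

lemma faceCone_subset (hK : Convex ℝ K) (h0 : 0 ∈ K) (u : E) : faceCone K u ⊆ K := by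
  rintro _ ⟨r, hr, x, hx, rfl⟩
  exact hK.smul_mem_of_zero_mem h0 hx.1 hr

lemma supportFun_mul_inner_le_of_mem_faceCone (hK : IsCompact K) (hu : 0 ≤ supportFun K u)
    (hz : z ∈ faceCone K u) : supportFun K u * ⟪z, v⟫ ≤ supportFun K v * ⟪z, u⟫ := by
  obtain ⟨r, hr, x, ⟨hxK, hxu : ⟪x, u⟫ = supportFun K u⟩, rfl⟩ := hz
  simp only [real_inner_smul_left, hxu]
  calc supportFun K u * (r * ⟪x, v⟫) ≤ supportFun K u * (r * supportFun K v) := by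
        gcongr
        · exact hr.1
        · exact inner_le_supportFun hK v hxK
    _ = supportFun K v * (r * supportFun K u) := by ring

lemma smul_supportFace_subset_faceCone_inter {s : ℝ} (hs : 0 < s) (hsu : s ≤ supportFun K u) :
    (s / supportFun K u) • supportFace K u ⊆ faceCone K u ∩ {x | ⟪x, u⟫ = s} := by
  have hu := hs.trans_le hsu
  rintro _ ⟨x, hx, rfl⟩
  refine ⟨smul_mem_smul ⟨div_nonneg hs.le hu.le, (div_le_one hu).2 hsu⟩ hx, ?_⟩
  change ⟪(s / supportFun K u) • x, u⟫ = s
  rw [real_inner_smul_left, (hx.2 : ⟪x, u⟫ = _), div_mul_cancel₀ _ hu.ne']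

variable [MeasurableSpace E] [BorelSpace E]

lemma ofReal_div_pow_mul_le_slice_faceCone (d : ℕ) {s : ℝ} (hs : 0 < s)
    (hsu : s ≤ supportFun K u) :
    ENNReal.ofReal (s / supportFun K u) ^ d * μHE[d] (supportFace K u) ≤
      μHE[d] (faceCone K u ∩ {x | ⟪x, u⟫ = s}) := by
  have hr : 0 < s / supportFun K u := div_pos hs (hs.trans_le hsu)
  calc ENNReal.ofReal (s / supportFun K u) ^ d * μHE[d] (supportFace K u)
      = μHE[d] ((s / supportFun K u) • supportFace K u) := by
        rw [Measure.euclideanHausdorffMeasure_smul₀ d hr.ne', ENNReal.smul_def, smul_eq_mul,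
          ENNReal.coe_pow, ← Real.toNNReal_eq_nnnorm_of_nonneg hr.le, ENNReal.ofReal]
    _ ≤ μHE[d] (faceCone K u ∩ {x | ⟪x, u⟫ = s}) :=
        measure_mono (smul_supportFace_subset_faceCone_inter hs hsu)

variable [FiniteDimensional ℝ E]

lemma aedisjoint_faceCone (hK : IsCompact K) (h0 : 0 ∈ interior K) (hu : ‖u‖ = 1) (hv : ‖v‖ = 1)
    (huv : u ≠ v) : AEDisjoint volume (faceCone K u) (faceCone K v) := by
  have hu_pos : 0 < supportFun K u := supportFun_pos hK h0 (norm_ne_zero_iff.1 (by simp [hu]))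
  have hv_pos : 0 < supportFun K v := supportFun_pos hK h0 (norm_ne_zero_iff.1 (by simp [hv]))
  have hw : supportFun K v • u - supportFun K u • v ≠ 0 := fun h => by
    have h_eq : supportFun K v • u = supportFun K u • v := sub_eq_zero.1 h
    have h_norm : supportFun K v = supportFun K u := by
      simpa [norm_smul, hu, hv, abs_of_pos hu_pos, abs_of_pos hv_pos] using congrArg norm h_eq
    exact huv (smul_right_injective E hu_pos.ne' (h_norm ▸ h_eq))
  refine measure_mono_null (t := ((ℝ ∙ (supportFun K v • u - supportFun K u • v))ᗮ :
    Submodule ℝ E)) ?_ (Measure.addHaar_submodule _ _ ?_)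
  · rintro z ⟨hzu, hzv⟩
    rw [SetLike.mem_coe, Submodule.mem_orthogonal_singleton_iff_inner_left, inner_sub_right,
      real_inner_smul_right, real_inner_smul_right, sub_eq_zero]
    exact (supportFun_mul_inner_le_of_mem_faceCone hK hv_pos.le hzv).antisymm
      (supportFun_mul_inner_le_of_mem_faceCone hK hu_pos.le hzu)
  · rwa [Ne, Submodule.orthogonal_eq_top_iff, Submodule.span_singleton_eq_bot]

lemma ofReal_supportFun_mul_le_volume_faceCone (hK : IsCompact K) (h0 : 0 ∈ interior K)
    (hu : ‖u‖ = 1) : ENNReal.ofReal (supportFun K u) * μHE[finrank ℝ E - 1] (supportFace K u) ≤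
      finrank ℝ E * volume (faceCone K u) := by
  have hu0 : u ≠ 0 := norm_ne_zero_iff.1 (by simp [hu])
  have : Nontrivial E := ⟨u, 0, hu0⟩
  obtain ⟨n, hn⟩ := Nat.exists_eq_add_one.2 (finrank_pos (R := ℝ) (M := E))
  rw [volume_eq_lintegral_slice hu (isCompact_faceCone hK u).measurableSet, hn,
    add_tsub_cancel_right, ← natCast_mul_lintegral_Ioc_div_pow (supportFun_pos hK h0 hu0) n,
    mul_assoc, ← lintegral_mul_const _ (by fun_prop)]
  refine mul_le_mul_right ?_ _
  calc ∫⁻ s in Ioc 0 (supportFun K u), ENNReal.ofReal (s / supportFun K u) ^ n *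
        μHE[n] (supportFace K u)
      ≤ ∫⁻ s in Ioc 0 (supportFun K u), μHE[n] (faceCone K u ∩ {x | ⟪x, u⟫ = s}) :=
        setLIntegral_mono' measurableSet_Ioc fun s hs =>
          ofReal_div_pow_mul_le_slice_faceCone n hs.1 hs.2
    _ ≤ ∫⁻ s, μHE[n] (faceCone K u ∩ {x | ⟪x, u⟫ = s}) := setLIntegral_le_lintegral _ _

theorem sum_supportFun_mul_le_volume (hK : IsCompact K) (hK_conv : Convex ℝ K)
    (h0 : 0 ∈ interior K) (U : Finset E) (hU : ∀ u ∈ U, ‖u‖ = 1) :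
    ∑ u ∈ U, ENNReal.ofReal (supportFun K u) * μHE[finrank ℝ E - 1] (supportFace K u) ≤
      finrank ℝ E * volume K :=
  calc ∑ u ∈ U, ENNReal.ofReal (supportFun K u) * μHE[finrank ℝ E - 1] (supportFace K u)
      ≤ ∑ u ∈ U, finrank ℝ E * volume (faceCone K u) :=
        Finset.sum_le_sum fun u hu => ofReal_supportFun_mul_le_volume_faceCone hK h0 (hU u hu)
    _ = finrank ℝ E * volume (⋃ u ∈ U, faceCone K u) := by
        rw [← Finset.mul_sum, measure_biUnion_finset₀
          (fun u hu v hv huv => aedisjoint_faceCone hK h0 (hU u hu) (hU v hv) huv)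
          fun u _ => (isCompact_faceCone hK u).nullMeasurableSet]
    _ ≤ finrank ℝ E * volume K := by
        gcongr
        exact iUnion₂_subset fun u _ => faceCone_subset hK_conv (interior_subset h0) u

end FaceCone

/-! ### Minkowski's first inequality -/

section Caps

variable {E : Type*} [NormedAddCommGroup E] [InnerProductSpace ℝ E] {K P Q : Set E} {u : E}

/-- The part of `K` beyond the hyperplane `⟪x, u⟫ = h`, projected orthogonally onto it (for a unit
vector `u`). -/
def capProjection (K : Set E) (u : E) (h : ℝ) : Set E :=
  (fun x => x + (h - ⟪x, u⟫) • u) '' (K ∩ {x | h ≤ ⟪x, u⟫})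

lemma isCompact_capProjection (hK : IsCompact K) (u : E) (h : ℝ) :
    IsCompact (capProjection K u h) :=
  (hK.inter_right (isClosed_le continuous_const (by fun_prop))).image (by fun_prop)

lemma capProjection_subset_hyperplane (K : Set E) (hu : ‖u‖ = 1) (h : ℝ) :
    capProjection K u h ⊆ {x | ⟪x, u⟫ = h} := by
  rintro _ ⟨x, -, rfl⟩
  simp [inner_add_left, real_inner_smul_left, hu]

lemma capProjection_mono {L : Set E} (hKL : K ⊆ L) (u : E) (h : ℝ) :
    capProjection K u h ⊆ capProjection L u h :=
  image_mono (inter_subset_inter_left _ hKL)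

lemma capProjection_supportFun_subset (hK : IsCompact K) (u : E) :
    capProjection K u (supportFun K u) ⊆ supportFace K u := by
  rintro _ ⟨x, ⟨hxK, hxu : supportFun K u ≤ ⟪x, u⟫⟩, rfl⟩
  have hx : ⟪x, u⟫ = supportFun K u := (inner_le_supportFun hK u hxK).antisymm hxu
  have hx_face : x ∈ supportFace K u := ⟨hxK, hx⟩
  simpa [hx] using hx_face

lemma iInter_capProjection_subset {ι : Type*} [Nonempty ι] {C : ι → Set E}
    (hC : ∀ i, IsCompact (C i)) (hdir : Directed (· ⊇ ·) C) (u : E) (h : ℝ) :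
    ⋂ i, capProjection (C i) u h ⊆ capProjection (⋂ i, C i) u h := by
  intro y hy
  let fiber : Set E := {x | h ≤ ⟪x, u⟫} ∩ {x | x + (h - ⟪x, u⟫) • u = y}
  have hfiber : IsClosed fiber :=
    (isClosed_le continuous_const (by fun_prop)).inter (isClosed_eq (by fun_prop) continuous_const)
  have hne : (⋂ i, C i ∩ fiber).Nonempty := by
    refine IsCompact.nonempty_iInter_of_directed_nonempty_isCompact_isClosed _
      (fun i j => (hdir i j).imp fun k hk => hk.imp (inter_subset_inter_left _)
        (inter_subset_inter_left _)) (fun i => ?_)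
      (fun i => (hC i).inter_right hfiber) fun i => (hC i).isClosed.inter hfiber
    obtain ⟨x, ⟨hxC, hxu⟩, hxy⟩ := mem_iInter.1 hy i
    exact ⟨x, hxC, hxu, hxy⟩
  obtain ⟨x, hx⟩ := hne
  rw [← iInter_inter] at hx
  exact ⟨x, ⟨hx.1, hx.2.1⟩, hx.2.2⟩

lemma add_smul_mono (hP : Convex ℝ P) (h0 : 0 ∈ P) (Q : Set E) {s t : ℝ} (hs : 0 < s)
    (hst : s ≤ t) : Q + s • P ⊆ Q + t • P := by
  refine add_subset_add_left ?_
  rintro _ ⟨p, hp, rfl⟩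
  have ht : 0 < t := hs.trans_le hst
  refine ⟨(s / t) • p, hP.smul_mem_of_zero_mem h0 hp
    ⟨div_nonneg hs.le ht.le, (div_le_one ht).2 hst⟩, ?_⟩
  simp only [smul_smul, mul_div_cancel₀ _ ht.ne']

lemma iInter_add_smul_subset (hP : IsCompact P) (hQ : IsClosed Q) :
    ⋂ t : Ioi (0 : ℝ), (Q + (t : ℝ) • P) ⊆ Q := by
  intro x hx
  have hx_mem (t : ℝ) (ht : 0 < t) : ∃ p ∈ P, x - t • p ∈ Q := by
    obtain ⟨q, hq, _, ⟨p, hp, rfl⟩, rfl⟩ := mem_iInter.1 hx ⟨t, ht⟩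
    exact ⟨p, hp, by simpa using hq⟩
  choose! p hp hpQ using hx_mem
  obtain ⟨C, hC⟩ := hP.isBounded.exists_norm_le
  have hbdd : Filter.IsBoundedUnder (· ≤ ·) (𝓝[>] 0) (norm ∘ p) :=
    Filter.isBoundedUnder_of_eventually_le
      (eventually_mem_nhdsWithin.mono fun t ht => hC _ (hp t ht))
  have hlim : Filter.Tendsto (fun t => x - t • p t) (𝓝[>] 0) (𝓝 x) := by
    simpa using tendsto_const_nhds.sub
      (NormedField.tendsto_zero_smul_of_tendsto_zero_of_bounded
        (Filter.tendsto_id.mono_left nhdsWithin_le_nhds) hbdd)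
  exact hQ.mem_of_tendsto hlim (eventually_mem_nhdsWithin.mono hpQ)

lemma volume_cap_le [FiniteDimensional ℝ E] [MeasurableSpace E] [BorelSpace E]
    (hK : IsCompact K) (hu : ‖u‖ = 1) {h r : ℝ} (hr : ∀ x ∈ K, ⟪x, u⟫ ≤ h + r) :
    volume (K ∩ {x | h < ⟪x, u⟫}) ≤
      ENNReal.ofReal r * μHE[finrank ℝ E - 1] (capProjection K u h) := by
  have hslice (s : ℝ) : μHE[finrank ℝ E - 1] (K ∩ {x | h < ⟪x, u⟫} ∩ {x | ⟪x, u⟫ = s}) ≤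
      (Ioc h (h + r)).indicator (fun _ => μHE[finrank ℝ E - 1] (capProjection K u h)) s := by
    by_cases hs : s ∈ Ioc h (h + r)
    · rw [indicator_of_mem hs, ← measure_vadd _ ((h - s) • u)]
      refine measure_mono ?_
      rintro _ ⟨x, ⟨⟨hx, hxh : h < ⟪x, u⟫⟩, hxs : ⟪x, u⟫ = s⟩, rfl⟩
      exact ⟨x, ⟨hx, hxh.le⟩, by simp [hxs, add_comm]⟩
    · rw [indicator_of_notMem hs, nonpos_iff_eq_zero]
      refine measure_mono_null (t := ∅) ?_ measure_empty
      rintro x ⟨⟨hx, hxh : h < ⟪x, u⟫⟩, hxs : ⟪x, u⟫ = s⟩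
      exact hs ⟨hxs ▸ hxh, hxs ▸ hr x hx⟩
  calc volume (K ∩ {x | h < ⟪x, u⟫})
      = ∫⁻ s, μHE[finrank ℝ E - 1] (K ∩ {x | h < ⟪x, u⟫} ∩ {x | ⟪x, u⟫ = s}) :=
        volume_eq_lintegral_slice hu
          (hK.measurableSet.inter (measurableSet_lt measurable_const (by fun_prop)))
    _ ≤ ∫⁻ s, (Ioc h (h + r)).indicator
          (fun _ => μHE[finrank ℝ E - 1] (capProjection K u h)) s := lintegral_mono hslice
    _ = ENNReal.ofReal r * μHE[finrank ℝ E - 1] (capProjection K u h) := by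
        rw [lintegral_indicator_const measurableSet_Ioc, Real.volume_Ioc, add_sub_cancel_left,
          mul_comm]

lemma exists_tendsto_capProjection_add_smul [FiniteDimensional ℝ E] [MeasurableSpace E]
    [BorelSpace E] (hP : IsCompact P) (hP_conv : Convex ℝ P) (h0 : 0 ∈ P) (hQ : IsCompact Q)
    (hu : ‖u‖ = 1) : ∃ L ≤ μHE[finrank ℝ E - 1] (supportFace Q u), Filter.Tendsto
      (fun t : ℝ => μHE[finrank ℝ E - 1] (capProjection (Q + t • P) u (supportFun Q u)))
      (𝓝[>] 0) (𝓝 L) := by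
  have hcompact (t : ℝ) : IsCompact (Q + t • P) := hQ.add (hP.smul t)
  refine ⟨_, measure_mono ?_, tendsto_measure_biInter_gt
    (fun t _ => (isCompact_capProjection (hcompact t) u _).nullMeasurableSet)
    (fun s t hs hst => capProjection_mono (add_smul_mono hP_conv h0 Q hs hst) u _)
    ⟨1, one_pos, euclideanHausdorffMeasure_ne_top_of_subset_hyperplane
      (norm_ne_zero_iff.1 (by simp [hu])) (isCompact_capProjection (hcompact 1) u _)
      (capProjection_subset_hyperplane _ hu _)⟩⟩
  calc ⋂ t > (0 : ℝ), capProjection (Q + t • P) u (supportFun Q u)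
      = ⋂ t : Ioi (0 : ℝ), capProjection (Q + (t : ℝ) • P) u (supportFun Q u) :=
        biInter_eq_iInter (Ioi (0 : ℝ)) _
    _ ⊆ capProjection (⋂ t : Ioi (0 : ℝ), (Q + (t : ℝ) • P)) u (supportFun Q u) :=
        iInter_capProjection_subset (C := fun t : Ioi (0 : ℝ) => Q + (t : ℝ) • P)
          (fun t => hcompact t)
          (directed_of_isDirected_ge fun s _ hst => add_smul_mono hP_conv h0 Q s.2 hst) u _
    _ ⊆ capProjection Q u (supportFun Q u) :=
        capProjection_mono (iInter_add_smul_subset hP hQ.isClosed) u _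
    _ ⊆ supportFace Q u := capProjection_supportFun_subset hQ u

lemma volume_add_smul_le [FiniteDimensional ℝ E] [MeasurableSpace E] [BorelSpace E]
    (hP : IsCompact P) (hQ : IsCompact Q) (U : Finset E) (hU : ∀ u ∈ U, ‖u‖ = 1)
    (hQU : ∀ x, (∀ u ∈ U, ⟪x, u⟫ ≤ supportFun Q u) → x ∈ Q) {t : ℝ} (ht : 0 ≤ t) :
    volume (Q + t • P) ≤ volume Q + ENNReal.ofReal t * ∑ u ∈ U, ENNReal.ofReal (supportFun P u) *
      μHE[finrank ℝ E - 1] (capProjection (Q + t • P) u (supportFun Q u)) := by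
  have hcover : Q + t • P ⊆ Q ∪ ⋃ u ∈ U, (Q + t • P) ∩ {x | supportFun Q u < ⟪x, u⟫} := by
    intro x hx
    by_contra! hcon
    simp only [mem_union, mem_iUnion, not_or, not_exists, mem_inter_iff, hx, true_and] at hcon
    exact hcon.1 (hQU x fun u hu => not_lt.1 (hcon.2 u hu))
  have hwidth (u : E) : ∀ x ∈ Q + t • P, ⟪x, u⟫ ≤ supportFun Q u + t * supportFun P u := by
    rintro _ ⟨q, hq, _, ⟨p, hp, rfl⟩, rfl⟩
    simp only [inner_add_left, real_inner_smul_left]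
    gcongr
    exacts [inner_le_supportFun hQ u hq, inner_le_supportFun hP u hp]
  calc volume (Q + t • P)
      ≤ volume Q + ∑ u ∈ U, volume ((Q + t • P) ∩ {x | supportFun Q u < ⟪x, u⟫}) :=
        (measure_mono hcover).trans <| (measure_union_le _ _).trans <| by
          gcongr
          exact measure_biUnion_finset_le _ _
    _ ≤ volume Q + ∑ u ∈ U, ENNReal.ofReal (t * supportFun P u) *
          μHE[finrank ℝ E - 1] (capProjection (Q + t • P) u (supportFun Q u)) := by
        gcongr with u hu
        exact volume_cap_le (hQ.add (hP.smul t)) (hU u hu) (hwidth u)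
    _ = _ := by simp only [Finset.mul_sum, ENNReal.ofReal_mul ht, mul_assoc]

end Caps

section MinkowskiInequality

variable {E : Type*} [NormedAddCommGroup E] [InnerProductSpace ℝ E] [FiniteDimensional ℝ E]
  [MeasurableSpace E] [BorelSpace E] {P Q : Set E}

lemma volume_add_ofReal_mul_le_volume_add_smul [Nontrivial E] (hP : IsCompact P)
    (hQ : IsCompact Q) (hP0 : P.Nonempty) (hQ0 : Q.Nonempty) {t : ℝ} (ht : 0 ≤ t) :
    volume Q + ENNReal.ofReal t *
      (finrank ℝ E * volumeRoot Q ^ (finrank ℝ E - 1) * volumeRoot P) ≤ volume (Q + t • P) := by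
  have hbm := volumeRoot_add_volumeRoot_le hQ (hP.smul t) hQ0 hP0.smul_set
  rw [volumeRoot_smul ht] at hbm
  calc volume Q + ENNReal.ofReal t *
        (finrank ℝ E * volumeRoot Q ^ (finrank ℝ E - 1) * volumeRoot P)
      = volumeRoot Q ^ finrank ℝ E + finrank ℝ E * volumeRoot Q ^ (finrank ℝ E - 1) *
          (ENNReal.ofReal t * volumeRoot P) := by
        rw [volumeRoot_pow_finrank, mul_left_comm]
    _ ≤ (volumeRoot Q + ENNReal.ofReal t * volumeRoot P) ^ finrank ℝ E :=
        pow_add_mul_le_add_pow zero_le zero_le _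
    _ ≤ volumeRoot (Q + t • P) ^ finrank ℝ E := pow_le_pow_left' hbm _
    _ = volume (Q + t • P) := volumeRoot_pow_finrank _

/-- Obtained by differentiating `(volumeRoot Q + t * volumeRoot P) ^ n ≤ volume (Q + t • P)` at
`t = 0⁺`. -/
theorem minkowski_first_inequality [Nontrivial E] (hP : IsCompact P) (hP_conv : Convex ℝ P)
    (h0 : 0 ∈ P) (hQ : IsCompact Q) (hQ0 : Q.Nonempty) (U : Finset E) (hU : ∀ u ∈ U, ‖u‖ = 1)
    (hQU : ∀ x, (∀ u ∈ U, ⟪x, u⟫ ≤ supportFun Q u) → x ∈ Q) :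
    finrank ℝ E * volumeRoot Q ^ (finrank ℝ E - 1) * volumeRoot P ≤
      ∑ u ∈ U, ENNReal.ofReal (supportFun P u) * μHE[finrank ℝ E - 1] (supportFace Q u) := by
  choose! L hL hlim using fun u (hu : u ∈ U) =>
    exists_tendsto_capProjection_add_smul hP hP_conv h0 hQ (hU u hu)
  have hcaps (t : ℝ) (ht : 0 < t) :
      finrank ℝ E * volumeRoot Q ^ (finrank ℝ E - 1) * volumeRoot P ≤
        ∑ u ∈ U, ENNReal.ofReal (supportFun P u) *
          μHE[finrank ℝ E - 1] (capProjection (Q + t • P) u (supportFun Q u)) := by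
    have h := (volume_add_ofReal_mul_le_volume_add_smul hP hQ ⟨0, h0⟩ hQ0 ht.le).trans
      (volume_add_smul_le hP hQ U hU hQU ht.le)
    rwa [ENNReal.add_le_add_iff_left hQ.measure_ne_top, ENNReal.mul_le_mul_iff_right
      (ENNReal.ofReal_pos.2 ht).ne' ENNReal.ofReal_ne_top] at h
  have hsum_lim := tendsto_finsetSum U fun u hu => ENNReal.Tendsto.const_mul
    (a := ENNReal.ofReal (supportFun P u)) (hlim u hu) (.inr ENNReal.ofReal_ne_top)
  calc finrank ℝ E * volumeRoot Q ^ (finrank ℝ E - 1) * volumeRoot P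
      ≤ ∑ u ∈ U, ENNReal.ofReal (supportFun P u) * L u :=
        ge_of_tendsto hsum_lim (eventually_mem_nhdsWithin.mono hcaps)
    _ ≤ ∑ u ∈ U, ENNReal.ofReal (supportFun P u) * μHE[finrank ℝ E - 1] (supportFace Q u) :=
        Finset.sum_le_sum fun u hu => mul_le_mul_right (hL u hu) _

theorem volume_le_of_supportFace_le (hE : 2 ≤ finrank ℝ E) (hP : IsCompact P)
    (hP_conv : Convex ℝ P) (h0 : 0 ∈ interior P) (hQ : IsCompact Q) (U : Finset E)
    (hU : ∀ u ∈ U, ‖u‖ = 1) (hQU : ∀ x, (∀ u ∈ U, ⟪x, u⟫ ≤ supportFun Q u) → x ∈ Q)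
    (hface : ∀ u ∈ U, μHE[finrank ℝ E - 1] (supportFace Q u) ≤
      μHE[finrank ℝ E - 1] (supportFace P u)) : volume Q ≤ volume P := by
  obtain rfl | hQ0 := Q.eq_empty_or_nonempty
  · simp
  have : Nontrivial E := nontrivial_of_finrank_pos (R := ℝ) (by lia)
  have hn0 : finrank ℝ E ≠ 0 := finrank_pos.ne'
  have hP_pos : volumeRoot P ≠ 0 := fun h =>
    (Measure.measure_pos_of_nonempty_interior volume ⟨0, h0⟩).ne' <| by
      rw [← volumeRoot_pow_finrank, h, zero_pow hn0]
  have hle : finrank ℝ E * volumeRoot Q ^ (finrank ℝ E - 1) * volumeRoot P ≤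
      finrank ℝ E * volumeRoot P ^ (finrank ℝ E - 1) * volumeRoot P :=
    calc finrank ℝ E * volumeRoot Q ^ (finrank ℝ E - 1) * volumeRoot P
        ≤ ∑ u ∈ U, ENNReal.ofReal (supportFun P u) * μHE[finrank ℝ E - 1] (supportFace Q u) :=
          minkowski_first_inequality hP hP_conv (interior_subset h0) hQ hQ0 U hU hQU
      _ ≤ ∑ u ∈ U, ENNReal.ofReal (supportFun P u) * μHE[finrank ℝ E - 1] (supportFace P u) :=
          Finset.sum_le_sum fun u hu => mul_le_mul_right (hface u hu) _
      _ ≤ finrank ℝ E * volume P := sum_supportFun_mul_le_volume hP hP_conv h0 U hU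
      _ = finrank ℝ E * volumeRoot P ^ (finrank ℝ E - 1) * volumeRoot P := by
          rw [mul_assoc, pow_sub_one_mul hn0, volumeRoot_pow_finrank]
  rw [ENNReal.mul_le_mul_iff_left hP_pos (volumeRoot_ne_top hP), ENNReal.mul_le_mul_iff_right
    (Nat.cast_ne_zero.2 hn0) (ENNReal.natCast_ne_top _),
    ENNReal.pow_le_pow_left_iff (by lia)] at hle
  calc volume Q = volumeRoot Q ^ finrank ℝ E := (volumeRoot_pow_finrank Q).symm
    _ ≤ volumeRoot P ^ finrank ℝ E := pow_le_pow_left' hle _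
    _ = volume P := volumeRoot_pow_finrank P

end MinkowskiInequality

/-! ### Polarity and facet normals -/

section ConvexPolar

variable {E : Type*} [NormedAddCommGroup E] [InnerProductSpace ℝ E] {s K : Set E} {x y z : E}

/-- The polar `s°` of convex geometry. Unlike `LinearMap.polar`, it bounds the inner product rather
than its absolute value, so that a non-symmetric convex set is recovered from its polar. -/
def convexPolar (s : Set E) : Set E := {y | ∀ x ∈ s, ⟪x, y⟫ ≤ 1}

lemma subset_convexPolar_comm {t : Set E} : s ⊆ convexPolar t ↔ t ⊆ convexPolar s :=
  ⟨fun h x hx y hy => by simpa [real_inner_comm] using h hy x hx,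
    fun h x hx y hy => by simpa [real_inner_comm] using h hy x hx⟩

lemma convexPolar_antitone : Antitone (convexPolar : Set E → Set E) :=
  fun _ _ hst _ hy x hx => hy x (hst hx)

lemma zero_mem_convexPolar (s : Set E) : 0 ∈ convexPolar s := fun x _ => by simp

lemma isClosed_convexPolar (s : Set E) : IsClosed (convexPolar s) := by
  simp only [convexPolar, ofPred_forall]
  exact isClosed_biInter fun x _ => isClosed_le (by fun_prop) continuous_const

lemma convex_convexPolar (s : Set E) : Convex ℝ (convexPolar s) := by
  simp only [convexPolar, ofPred_forall]
  exact convex_iInter₂ fun x _ => convex_halfSpace_le (innerₗ E x).isLinear 1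

lemma convexPolar_closure_convexHull (s : Set E) :
    convexPolar (closure (convexHull ℝ s)) = convexPolar s :=
  (convexPolar_antitone ((subset_convexHull ℝ s).trans subset_closure)).antisymm <|
    subset_convexPolar_comm.1 <| closure_minimal
      (convexHull_min (subset_convexPolar_comm.1 Subset.rfl) (convex_convexPolar _))
      (isClosed_convexPolar _)

lemma isBounded_convexPolar (h0 : 0 ∈ interior s) : Bornology.IsBounded (convexPolar s) := by
  obtain ⟨r, hr, hball⟩ := Metric.nhds_basis_closedBall.mem_iff.1 (mem_interior_iff_mem_nhds.1 h0)
  refine isBounded_iff_forall_norm_le.2 ⟨r⁻¹, fun y hy => ?_⟩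
  obtain rfl | hy0 := eq_or_ne y 0
  · simpa using hr.le
  have hle := hy ((r / ‖y‖) • y) <| hball <| by
    simp [norm_smul, abs_of_pos hr, hy0]
  rw [real_inner_smul_left, real_inner_self_eq_norm_mul_norm, ← mul_assoc,
    div_mul_cancel₀ _ (norm_ne_zero_iff.2 hy0)] at hle
  rwa [← one_div, le_div_iff₀' hr]

theorem convexPolar_convexPolar [CompleteSpace E] (hK : Convex ℝ K) (hK_closed : IsClosed K)
    (h0 : 0 ∈ K) : convexPolar (convexPolar K) = K := by
  refine Subset.antisymm (fun x hx => ?_) (subset_convexPolar_comm.1 Subset.rfl)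
  by_contra hxK
  obtain ⟨f, a, hfa, hax⟩ := geometric_hahn_banach_closed_point hK hK_closed hxK
  have ha : 0 < a := by simpa using hfa 0 h0
  let y := (InnerProductSpace.toDual ℝ E).symm f
  have hy (z : E) : ⟪a⁻¹ • y, z⟫ = f z / a := by
    rw [real_inner_smul_left, InnerProductSpace.toDual_symm_apply, inv_mul_eq_div]
  have hy_mem : a⁻¹ • y ∈ convexPolar K := fun z hz => by
    rw [real_inner_comm, hy, div_le_one ha]
    exact (hfa z hz).le
  have hle := hx _ hy_mem
  rw [hy, div_le_one ha] at hle
  exact hle.not_gt hax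

lemma eventually_add_smul_sub_mem_convexPolar (hs : s.Finite) (hy : y ∈ convexPolar s)
    (hyz : ∀ x ∈ s, ⟪x, y⟫ = 1 → ⟪x, z⟫ = 1) :
    ∀ᶠ ε : ℝ in 𝓝 0, y + ε • (z - y) ∈ convexPolar s := by
  refine (Filter.eventually_all_finite hs).2 fun x hx => ?_
  obtain hxy | hxy := (hy x hx).eq_or_lt
  · exact .of_forall fun ε => by
      simp [inner_add_right, real_inner_smul_right, inner_sub_right, hxy, hyz x hx hxy]
  · have hcont : Continuous fun ε : ℝ => ⟪x, y + ε • (z - y)⟫ := by fun_prop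
    filter_upwards [hcont.continuousAt.eventually_lt_const (by simpa using hxy)] with ε hε
    exact hε.le

lemma eq_zero_of_add_mem_of_sub_mem (hy : y ∈ extremePoints ℝ s) (hadd : y + x ∈ s)
    (hsub : y - x ∈ s) : x = 0 := by
  have hseg : y ∈ openSegment ℝ (y + x) (y - x) :=
    ⟨1 / 2, 1 / 2, by norm_num, by norm_num, by norm_num, by module⟩
  simpa using hy.2 hadd hsub hseg

/-- An extreme point of `s°` is determined by the set of constraints that are tight at it. -/
lemma finite_extremePoints_convexPolar (hs : s.Finite) :
    (extremePoints ℝ (convexPolar s)).Finite := by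
  refine Finite.of_finite_image (f := fun y => {x ∈ s | ⟪x, y⟫ = 1})
    (hs.finite_subsets.subset (by rintro _ ⟨y, -, rfl⟩; exact sep_subset _ _))
    fun y hy z _ hyz => ?_
  have htight (x) (hx : x ∈ s) (hxy : ⟪x, y⟫ = 1) : ⟪x, z⟫ = 1 :=
    (Eq.subset hyz ⟨hx, hxy⟩).2
  have hmem := eventually_add_smul_sub_mem_convexPolar hs hy.1 htight
  have hmem_neg := (continuous_neg.tendsto' (0 : ℝ) 0 neg_zero).eventually hmem
  obtain ⟨ε, ⟨hadd, hsub⟩, hε⟩ := (((hmem.and hmem_neg).filter_mono nhdsWithin_le_nhds).and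
    (self_mem_nhdsWithin (s := Ioi (0 : ℝ)))).exists
  have hzero := eq_zero_of_add_mem_of_sub_mem hy hadd (by simpa [← sub_eq_add_neg] using hsub)
  exact (sub_eq_zero.1 ((smul_eq_zero_iff_right (ne_of_gt hε)).1 hzero)).symm

theorem exists_finite_convexPolar_eq_convexHull [FiniteDimensional ℝ E] (hs : s.Finite)
    (h0 : 0 ∈ interior (convexHull ℝ s)) :
    ∃ t : Set E, t.Finite ∧ convexPolar t = convexHull ℝ s := by
  have hclosed : IsClosed (convexHull ℝ s) := hs.isClosed_convexHull ℝ
  have hpolar : convexPolar (convexHull ℝ s) = convexPolar s := by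
    rw [← hclosed.closure_eq, convexPolar_closure_convexHull]
  have hcompact : IsCompact (convexPolar s) :=
    Metric.isCompact_of_isClosed_isBounded (isClosed_convexPolar s)
      (hpolar ▸ isBounded_convexPolar h0)
  refine ⟨extremePoints ℝ (convexPolar s), finite_extremePoints_convexPolar hs, ?_⟩
  rw [← convexPolar_closure_convexHull,
    closure_convexHull_extremePoints hcompact (convex_convexPolar s), ← hpolar,
    convexPolar_convexPolar (convex_convexHull ℝ s) hclosed (interior_subset h0)]

lemma exists_finset_forall_inner_le_supportFun_convexPolar (hs : s.Finite) :
    ∃ U : Finset E, (∀ u ∈ U, ‖u‖ = 1) ∧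
      ∀ x, (∀ u ∈ U, ⟪x, u⟫ ≤ supportFun (convexPolar s) u) → x ∈ convexPolar s := by
  classical
  have hsupp (v : E) (hv : v ∈ s) : supportFun (convexPolar s) (‖v‖⁻¹ • v) ≤ ‖v‖⁻¹ := by
    refine csSup_le ⟨_, mem_image_of_mem _ (zero_mem_convexPolar s)⟩ (forall_mem_image.2 ?_)
    intro y hy
    rw [real_inner_smul_right, real_inner_comm]
    exact mul_le_of_le_one_right (by positivity) (hy v hv)
  refine ⟨(hs.toFinset.erase 0).image fun v => ‖v‖⁻¹ • v, ?_, fun x hx v hv => ?_⟩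
  · simp only [Finset.mem_image, Finset.mem_erase]
    rintro _ ⟨v, ⟨hv0, -⟩, rfl⟩
    exact norm_smul_inv_norm (𝕜 := ℝ) hv0
  · obtain rfl | hv0 := eq_or_ne v 0
    · simp
    have hle := (hx _ (Finset.mem_image_of_mem _ (by simp [hv0, hv]))).trans (hsupp v hv)
    rw [real_inner_smul_right, real_inner_comm] at hle
    simpa [hv0] using hle

end ConvexPolar

lemma zero_mem_interior_neg_vadd {G : Type*} [AddGroup G] [TopologicalSpace G]
    [ContinuousConstVAdd G G] {s : Set G} {a : G} (ha : a ∈ interior s) :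
    0 ∈ interior (-a +ᵥ s) := by
  rw [interior_vadd]
  exact ⟨a, ha, neg_add_cancel a⟩

section Polytopes

variable {m : ℕ} {P Q K : Set (Euc m)}

lemma IsPolytope.vadd (hQ : IsPolytope Q) (a : Euc m) : IsPolytope (a +ᵥ Q) := by
  classical
  obtain ⟨s, rfl⟩ := hQ
  exact ⟨a +ᵥ s, by rw [Finset.coe_vadd_finset, convexHull_vadd]⟩

lemma IsPolytope.convex (hQ : IsPolytope Q) : Convex ℝ Q := by
  obtain ⟨s, rfl⟩ := hQ
  exact convex_convexHull ℝ _

lemma IsPolytope.isCompact (hQ : IsPolytope Q) : IsCompact Q := by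
  obtain ⟨s, rfl⟩ := hQ
  exact s.finite_toSet.isCompact_convexHull ℝ

theorem IsPolytope.exists_finset_forall_inner_le_supportFun (hQ : IsPolytope Q)
    (h0 : 0 ∈ interior Q) : ∃ U : Finset (Euc m), (∀ u ∈ U, ‖u‖ = 1) ∧
      ∀ x, (∀ u ∈ U, ⟪x, u⟫ ≤ supportFun Q u) → x ∈ Q := by
  obtain ⟨s, rfl⟩ := hQ
  obtain ⟨t, ht, hpolar⟩ := exists_finite_convexPolar_eq_convexHull s.finite_toSet h0
  exact hpolar ▸ exists_finset_forall_inner_le_supportFun_convexPolar ht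

lemma faceIn_eq_supportFace (hK : IsCompact K) (u : Euc m) : faceIn K u = supportFace K u :=
  ext fun _ => (mem_supportFace_iff hK).symm

lemma faceIn_vadd (a : Euc m) (K : Set (Euc m)) (u : Euc m) :
    faceIn (a +ᵥ K) u = a +ᵥ faceIn K u := by
  ext x
  obtain ⟨y, rfl⟩ : ∃ y, a +ᵥ y = x := ⟨-a +ᵥ x, vadd_neg_vadd a x⟩
  have hforall : (∀ z ∈ a +ᵥ K, ⟪z, u⟫ ≤ ⟪a +ᵥ y, u⟫) ↔ ∀ z ∈ K, ⟪z, u⟫ ≤ ⟪y, u⟫ := by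
    simp only [← image_vadd, forall_mem_image, vadd_eq_add, inner_add_left, add_le_add_iff_left]
  rw [vadd_mem_vadd_set_iff]
  exact and_congr vadd_mem_vadd_set_iff hforall

lemma faceArea_vadd (a : Euc m) (K : Set (Euc m)) (u : Euc m) :
    faceArea (a +ᵥ K) u = faceArea K u := by
  rw [faceArea, faceIn_vadd]
  exact (IsometryEquiv.addLeft a).hausdorffMeasure_image _ _

lemma euclideanHausdorffMeasure_supportFace_le (hm : 1 ≤ m) (hP : IsCompact P) (hQ : IsCompact Q)
    {u : Euc m} (h : faceArea Q u ≤ faceArea P u) :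
    μHE[finrank ℝ (Euc m) - 1] (supportFace Q u) ≤
      μHE[finrank ℝ (Euc m) - 1] (supportFace P u) := by
  rw [faceArea, faceArea, faceIn_eq_supportFace hQ, faceIn_eq_supportFace hP] at h
  rw [← Nat.cast_pred hm] at h
  rw [finrank_euclideanSpace_fin, Measure.euclideanHausdorffMeasure_def, Measure.smul_apply,
    Measure.smul_apply]
  gcongr

theorem volume_le_of_faceArea_le (hm : 2 ≤ m) (hP : IsCompact P) (hP_conv : Convex ℝ P)
    (hP0 : 0 ∈ interior P) (hQ : IsPolytope Q) (hQ0 : 0 ∈ interior Q)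
    (hface : ∀ u, ‖u‖ = 1 → faceArea Q u ≤ faceArea P u) : volume Q ≤ volume P := by
  obtain ⟨U, hU, hQU⟩ := hQ.exists_finset_forall_inner_le_supportFun hQ0
  exact volume_le_of_supportFace_le (by simpa using hm) hP hP_conv hP0 hQ.isCompact U hU hQU
    fun u hu => euclideanHausdorffMeasure_supportFace_le (by lia) hP hQ.isCompact
      (hface u (hU u hu))

theorem volume_monotone_polytopes_general (hm : 2 ≤ m) (hP : IsConvexBody P) (hQ : IsPolytope Q)
    (hface : ∀ u, IsFacetNormal Q u → faceArea Q u ≤ faceArea P u) : volume Q ≤ volume P := by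
  obtain ⟨hP_conv, hP_comp, p, hp⟩ := hP
  obtain hQ_int | ⟨q, hq⟩ := (interior Q).eq_empty_or_nonempty
  · have hfrontier : frontier Q = Q := by
      rw [hQ.isCompact.isClosed.frontier_eq, hQ_int, sdiff_empty]
    rw [← hfrontier, hQ.convex.addHaar_frontier volume]
    exact zero_le
  have hface_unit (u : Euc m) (hu : ‖u‖ = 1) : faceArea Q u ≤ faceArea P u := by
    obtain h0 | hpos := eq_zero_or_pos (faceArea Q u)
    · exact h0.trans_le zero_le
    · exact hface u ⟨hu, hpos⟩
  have hle : volume (-q +ᵥ Q) ≤ volume (-p +ᵥ P) :=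
    volume_le_of_faceArea_le hm (hP_comp.vadd _) (hP_conv.vadd _) (zero_mem_interior_neg_vadd hp)
      (hQ.vadd _) (zero_mem_interior_neg_vadd hq) (by simpa only [faceArea_vadd] using hface_unit)
  simpa only [measure_vadd] using hle

end Polytopes

/-- if each face of `P` in a common facet-normal direction has
`(m-1)`-volume at least that of the corresponding face of `Q`, then `P` has
larger `m`-volume. -/
theorem volume_monotone_polytopes {m : ℕ} (hm : 2 ≤ m)
    (P Q : Set (Euc m)) (hP : IsPolytope P) (hPbody : IsConvexBody P)
    (hQ : IsPolytope Q) (hQbody : IsConvexBody Q)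
    (hface : ∀ u : Euc m, IsFacetNormal P u ∨ IsFacetNormal Q u →
      faceArea Q u ≤ faceArea P u) :
    volume Q ≤ volume P :=
  volume_monotone_polytopes_general hm hPbody hQ fun u hu => hface u (.inr hu)
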